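/- Let G be a real semisimple Lie algebra of rank ≥ 2. Then G admits no antisymmetric closed 2-cocycle ω whose radical { x : ω(x,·) = 0 } is 1-dimensional. In particular a semisimple Lie algebra carrying a codimension-1 kählerian CR structure must have rank 1, hence (in dimension 3) be isomorphic to so(3) or sl(2,ℝ). -/

import Mathlib

/-!
Cartan's criterion makes the Killing form `κ` of a real semisimple Lie algebra nondegenerate, so a
bilinear form `ω` can be written `ω x y = κ (D x) y`. When `ω` is antisymmetric and closed,
invariance of `κ` says exactly that `D` is a derivation; it is inner, `D = ad X`, and the
radical of `ω` is the centralizer of `X`.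

It remains to see that every centralizer has dimension at least the rank
(`rank_le_finrank_ker_ad`). For regular `Z` the Engel subalgebra of `Z` is a Cartan subalgebra of
dimension equal to the rank (`isCartanSubalgebra_engel_of_isRegular`). Cartan subalgebras are
abelian because `κ` is nondegenerate, so this one centralizes `Z`. An arbitrary `X` is a limit of
regular elements along a line through a regular element, and the dimension of the kernel of `ad`
can only drop under a small perturbation.
-/

open Module LieAlgebra Topology

/-- The Engel subalgebra of a regular element is minimal among Engel subalgebras for dimension
reasons, hence nilpotent. -/
theorem isCartanSubalgebra_engel_of_isRegular {K L : Type*} [Field K] [Infinite K] [LieRing L]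
    [LieAlgebra K L] [FiniteDimensional K L] {x : L} (hx : IsRegular K x) :
    (LieSubalgebra.engel K x).IsCartanSubalgebra := by
  refine ⟨?_, LieSubalgebra.normalizer_engel _ _⟩
  apply LieSubalgebra.isNilpotent_of_forall_le_engel
  intro y hy
  let Ex : {LieSubalgebra.engel K z | z ∈ LieSubalgebra.engel K x} :=
    ⟨LieSubalgebra.engel K x, x, LieSubalgebra.self_mem_engel _ _, rfl⟩
  suffices IsBot Ex from @this ⟨LieSubalgebra.engel K y, y, hy, rfl⟩
  have hcard : (finrank K L : Cardinal) ≤ Cardinal.mk K :=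
    Cardinal.natCast_le_aleph0.trans <| Cardinal.infinite_iff.mp ‹Infinite K›
  apply engel_isBot_of_isMin hcard (LieSubalgebra.engel K x) Ex le_rfl
  rintro ⟨_, y, hy, rfl⟩ hyx
  suffices finrank K (LieSubalgebra.engel K x) ≤ finrank K (LieSubalgebra.engel K y) by
    suffices LieSubalgebra.engel K y = LieSubalgebra.engel K x from this.ge
    apply LieSubalgebra.toSubmodule_injective
    exact Submodule.eq_of_le_of_finrank_le hyx this
  rw [(isRegular_iff_finrank_engel_eq_rank K x).mp hx]
  apply rank_le_finrank_engel

theorem rank_le_finrank_ker_ad_of_isRegular {K L : Type*} [Field K] [Infinite K] [LieRing L]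
    [LieAlgebra K L] [FiniteDimensional K L] [IsKilling K L] {x : L} (hx : IsRegular K x) :
    rank K L ≤ finrank K (LinearMap.ker (ad K L x : L →ₗ[K] L)) := by
  have hC := isCartanSubalgebra_engel_of_isRegular hx
  have hab : IsLieAbelian (LieSubalgebra.engel K x) := inferInstance
  rw [← (isRegular_iff_finrank_engel_eq_rank K x).mp hx]
  refine Submodule.finrank_mono (s := (LieSubalgebra.engel K x).toSubmodule) fun y hy ↦ ?_
  have := hab.trivial ⟨x, LieSubalgebra.self_mem_engel K x⟩ ⟨y, hy⟩
  simpa using congrArg Subtype.val this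

/-- Regularity is the nonvanishing of a polynomial. Restricted to a line containing a regular
element that polynomial is nonzero, so it has no roots close to, but different from, `0`. -/
theorem eventually_isRegular_line {L : Type*} [LieRing L] [LieAlgebra ℝ L] [FiniteDimensional ℝ L]
    (x y : L) (hy : IsRegular ℝ (x + y)) :
    ∀ᶠ t : ℝ in 𝓝[≠] 0, IsRegular ℝ (x + t • y) := by
  classical
  let b := finBasis ℝ L
  obtain ⟨P, hP⟩ : ∃ P : MvPolynomial (Fin (finrank ℝ L)) ℝ,
      ∀ z : L, IsRegular ℝ z ↔ MvPolynomial.eval (b.repr z) P ≠ 0 :=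
    ⟨_, fun z ↦ isRegular_iff_coeff_polyCharpoly_rank_ne_zero ℝ b z⟩
  let p : Polynomial ℝ := MvPolynomial.aeval
    (fun i ↦ Polynomial.C (b.repr x i) + Polynomial.X * Polynomial.C (b.repr y i)) P
  have hp (t : ℝ) : p.eval t = MvPolynomial.eval (b.repr (x + t • y)) P := by
    have h : (fun i ↦ Polynomial.aeval t (Polynomial.C (b.repr x i) +
        Polynomial.X * Polynomial.C (b.repr y i))) = b.repr (x + t • y) := by
      ext i; simp [mul_comm t]
    rw [← Polynomial.coe_aeval_eq_eval, ← h, ← MvPolynomial.coe_aeval_eq_eval]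
    exact MvPolynomial.comp_aeval_apply (B := ℝ) (φ := Polynomial.aeval t) _ P
  have hreg (t : ℝ) : IsRegular ℝ (x + t • y) ↔ p.eval t ≠ 0 := by
    rw [hp]; exact hP _
  have hp0 : p ≠ 0 := by
    intro h
    have := (hreg 1).mp (by simpa using hy)
    simp [h] at this
  have hfin : {t | p.IsRoot t}.Finite := Polynomial.finite_setOfPred_isRoot hp0
  filter_upwards [nhdsNE_le_cofinite 0 hfin.compl_mem_cofinite] with t ht
  exact (hreg t).mpr ht

/-- The rank of `f + t • g` is at least that of `f` for small `t`. -/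
theorem eventually_finrank_range_le {V : Type*} [AddCommGroup V] [Module ℝ V]
    [FiniteDimensional ℝ V] (f g : V →ₗ[ℝ] V) :
    ∀ᶠ t : ℝ in 𝓝 0, finrank ℝ (LinearMap.range f) ≤ finrank ℝ (LinearMap.range (f + t • g)) := by
  let e := (finBasis ℝ V).equivFun
  let c := finBasis ℝ (LinearMap.range f)
  choose v hv using fun i ↦ (c i).2
  have hc : LinearIndependent ℝ (fun i ↦ e (f (v i))) := by
    have h1 : LinearIndependent ℝ (fun i ↦ f (v i)) := by
      simp_rw [hv]
      exact c.linearIndependent.map' (LinearMap.range f).subtype (Submodule.ker_subtype _)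
    exact h1.map' e.toLinearMap e.ker
  let γ : ℝ → Fin (finrank ℝ (LinearMap.range f)) → Fin (finrank ℝ V) → ℝ :=
    fun t i ↦ e (f (v i)) + t • e (g (v i))
  have hγ : Continuous γ := by fun_prop
  have h0 : γ 0 ∈ {u | LinearIndependent ℝ u} := by simpa [γ] using hc
  filter_upwards [hγ.continuousAt.preimage_mem_nhds
    (isOpen_setOfPred_linearIndependent.mem_nhds h0)] with t ht
  have ht' : LinearIndependent ℝ (fun i ↦ (f + t • g) (v i)) := by
    refine LinearIndependent.of_comp e.toLinearMap ?_
    convert! (show LinearIndependent ℝ (γ t) from ht) using 1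
    ext i j
    simp [γ]
  have hr : LinearIndependent ℝ (fun i ↦ (f + t • g).rangeRestrict (v i)) :=
    LinearIndependent.of_comp (LinearMap.range (f + t • g)).subtype ht'
  simpa using hr.fintype_card_le_finrank

/-- Every centralizer has dimension at least the rank. -/
theorem rank_le_finrank_ker_ad {L : Type*} [LieRing L] [LieAlgebra ℝ L] [FiniteDimensional ℝ L]
    [IsKilling ℝ L] (x : L) :
    rank ℝ L ≤ finrank ℝ (LinearMap.ker (ad ℝ L x : L →ₗ[ℝ] L)) := by
  obtain ⟨y, hy⟩ := exists_isRegular ℝ L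
  have h1 := eventually_isRegular_line x (y - x) (by simpa using hy)
  have h2 := (eventually_finrank_range_le (ad ℝ L x : L →ₗ[ℝ] L)
    (ad ℝ L (y - x))).filter_mono (nhdsWithin_le_nhds (s := {0}ᶜ))
  obtain ⟨t, ht, hle⟩ := (h1.and h2).exists
  have h3 := rank_le_finrank_ker_ad_of_isRegular ht
  have h4 : (ad ℝ L (x + t • (y - x)) : L →ₗ[ℝ] L) = ad ℝ L x + t • ad ℝ L (y - x) := by
    rw [map_add, map_smul]
  have h5 := LinearMap.finrank_range_add_finrank_ker (ad ℝ L x : L →ₗ[ℝ] L)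
  have h6 := LinearMap.finrank_range_add_finrank_ker (ad ℝ L (x + t • (y - x)) : L →ₗ[ℝ] L)
  rw [← h4] at hle
  omega

/-- A closed antisymmetric form on a Lie algebra with nondegenerate Killing form is
`(x, y) ↦ κ(⁅X, x⁆, y)` for some `X`: the operator representing it is a derivation, hence inner. -/
theorem exists_eq_killingForm_lie {K L : Type*} [Field K] [LieRing L] [LieAlgebra K L]
    [FiniteDimensional K L] [IsKilling K L] (ω : L →ₗ[K] L →ₗ[K] K)
    (hanti : ∀ x y, ω x y = - ω y x)
    (hclosed : ∀ x y z : L, ω ⁅x, y⁆ z + ω ⁅z, x⁆ y + ω ⁅y, z⁆ x = 0) :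
    ∃ X : L, ∀ x y, ω x y = killingForm K L ⁅X, x⁆ y := by
  have hnd := IsKilling.killingForm_nondegenerate K L
  let κ : L ≃ₗ[K] Dual K L := LinearMap.BilinForm.toDual (killingForm K L) hnd
  let D : L →ₗ[K] L := κ.symm.toLinearMap ∘ₗ ω
  have hD (x y : L) : killingForm K L (D x) y = ω x y :=
    LinearMap.BilinForm.apply_toDual_symm_apply (hB := hnd) (ω x) y
  have hinv (a b c : L) := LieModule.traceForm_apply_lie_apply' K L L a b c
  let 𝒟 : LieDerivation K L L :=
    { toLinearMap := D
      leibniz' := fun x y ↦ by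
        apply κ.injective
        ext z
        change killingForm K L (D ⁅x, y⁆) z = killingForm K L (⁅x, D y⁆ - ⁅y, D x⁆) z
        have h1 : killingForm K L ⁅x, D y⁆ z = - ω y ⁅x, z⁆ := by rw [← hD]; exact hinv ..
        have h2 : killingForm K L ⁅y, D x⁆ z = - ω x ⁅y, z⁆ := by rw [← hD]; exact hinv ..
        have h3 : ω y ⁅x, z⁆ = ω ⁅z, x⁆ y := by
          rw [hanti y, ← lie_skew z x, map_neg, LinearMap.neg_apply]
        rw [hD, map_sub, LinearMap.sub_apply, h1, h2, h3, hanti x]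
        linear_combination hclosed x y z }
  obtain ⟨X, hX⟩ := LieDerivation.IsKilling.exists_eq_ad 𝒟
  refine ⟨X, fun x y ↦ ?_⟩
  have : ⁅X, x⁆ = D x := by
    have h := congrArg (fun d : LieDerivation K L L ↦ d x) hX
    rwa [LieDerivation.ad_apply_apply] at h
  rw [this, hD]

/-- A real semisimple Lie algebra of rank ≥ 2 admits no antisymmetric
closed 2-cocycle whose radical { x : ω(x,·) = 0 } is 1-dimensional. -/
theorem stmt19 {L : Type*} [LieRing L] [LieAlgebra ℝ L] [FiniteDimensional ℝ L]
    [LieAlgebra.IsSemisimple ℝ L]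
    (hrank : 2 ≤ LieAlgebra.rank ℝ L) :
    ¬ ∃ ω : L →ₗ[ℝ] L →ₗ[ℝ] ℝ,
        (∀ x y : L, ω x y = - ω y x) ∧
        (∀ x y z : L, ω ⁅x, y⁆ z + ω ⁅z, x⁆ y + ω ⁅y, z⁆ x = 0) ∧
        Module.finrank ℝ (LinearMap.ker ω) = 1 := by
  rintro ⟨ω, hanti, hclosed, hker⟩
  obtain ⟨X, hX⟩ := exists_eq_killingForm_lie ω hanti hclosed
  have hle : LinearMap.ker (ad ℝ L X : L →ₗ[ℝ] L) ≤ LinearMap.ker ω := fun x hx ↦ by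
    have hx' : ⁅X, x⁆ = 0 := hx
    ext y
    simp [hX, hx']
  have := Submodule.finrank_mono hle
  have := rank_le_finrank_ker_ad X
  omega
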